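/- Gram matrix entries for the polynomials p_n: for all natural numbers k ≤ n, ∫₀¹ p_n(x)·p_k(x) dx = (-1)^{n+k} · ((1/2)_n / (n+1)!) · ∑_{j=0}^{⌊k/2⌋} [ (k+1)_j · (-k/2)_j · (-(k-1)/2)_j · (1/2)_j ] / [ (-n+1/2)_j · ((n+2)/2)_j · ((n+3)/2)_j · j! ], a terminating hypergeometric (₄F₃-type) sum. -/

import Mathlib

open MeasureTheory intervalIntegral

/-- The Pochhammer symbol (rising factorial) `(a)_m = a(a+1)⋯(a+m-1)` over `ℝ`. -/
noncomputable def poch (a : ℝ) (m : ℕ) : ℝ := (ascPochhammer ℝ m).eval a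

/-- The polynomial `p_n(x) = ∑_{k=0}^n (n choose k) ((k/2+1)_n / n!) (-1)^{n-k} x^k`. -/
noncomputable def pAlp (n : ℕ) (x : ℝ) : ℝ :=
  ∑ k ∈ Finset.range (n + 1),
    (n.choose k : ℝ) * (poch ((k : ℝ) / 2 + 1) n / (n.factorial : ℝ)) * (-1) ^ (n - k) * x ^ k

lemma poch_zero (a : ℝ) : poch a 0 = 1 := by simp [poch]

lemma poch_succ (a : ℝ) (m : ℕ) : poch a (m + 1) = poch a m * (a + m) := by
  simp [poch, ascPochhammer_succ_eval]

lemma poch_succ_left (a : ℝ) (m : ℕ) : poch a (m + 1) = a * poch (a + 1) m := by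
  simp [poch, ascPochhammer_succ_left]

lemma poch_shift (a : ℝ) (m : ℕ) : a * poch (a + 1) m = poch a m * (a + m) := by
  rw [← poch_succ, poch_succ_left]

lemma poch_pos (a : ℝ) (ha : 0 < a) (m : ℕ) : 0 < poch a m := ascPochhammer_pos m a ha

lemma termA (k j : ℕ) : (k.choose (2 * j) : ℝ) * (j.factorial * poch (1 / 2) j) =
    poch (-(k : ℝ) / 2) j * poch (-((k : ℝ) - 1) / 2) j := by
  have h : ∀ m : ℕ, (k.choose (m + 1) : ℝ) * (m + 1) = k.choose m * ((k : ℝ) - m) := by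
    intro m
    rcases le_or_gt m k with hm | hm
    · rw [← Nat.cast_sub hm]
      exact_mod_cast Nat.choose_succ_right_eq k m
    · simp [Nat.choose_eq_zero_of_lt hm, Nat.choose_eq_zero_of_lt (Nat.lt_succ_of_lt hm)]
  induction j with
  | zero => simp [poch_zero]
  | succ j ih =>
    have h1 := h (2 * j)
    have h2 := h (2 * j + 1)
    push_cast at h1 h2
    simp only [poch_succ, Nat.factorial_succ, Nat.cast_mul, Nat.cast_succ]
    rw [show 2 * (j + 1) = 2 * j + 1 + 1 by ring]
    linear_combination (-(k : ℝ) / 2 + j) * (-((k : ℝ) - 1) / 2 + j) * ih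
      + (j.factorial * poch (1 / 2) j) * (1 / 4) * ((2 * j + 1) * h2 + ((k : ℝ) - (2 * j + 1)) * h1)

lemma termB (k j : ℕ) : poch ((j : ℝ) + 1) k * j.factorial = poch ((k : ℝ) + 1) j * k.factorial := by
  induction j with
  | zero =>
    have := ascPochhammer_eval_one ℝ k
    simp [poch_zero, poch, this]
  | succ j ih =>
    have := poch_shift ((j : ℝ) + 1) k
    simp only [poch_succ, Nat.factorial_succ, Nat.cast_mul, Nat.cast_succ]
    linear_combination j.factorial * this + ((j : ℝ) + 1 + k) * ih

lemma termC (n j : ℕ) : poch (1 / 2 - (j : ℝ)) n * poch (-(n : ℝ) + 1 / 2) j =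
    poch (1 / 2) n * poch (1 / 2) j := by
  induction j with
  | zero => simp [poch_zero]
  | succ j ih =>
    have := poch_shift (1 / 2 - ((j : ℝ) + 1)) n
    rw [show 1 / 2 - ((j : ℝ) + 1) + 1 = 1 / 2 - j by ring] at this
    simp only [poch_succ, Nat.cast_succ]
    linear_combination (1 / 2 + (j : ℝ)) * ih + poch (-(n : ℝ) + 1 / 2) j * this

lemma termD (n j : ℕ) : poch (2 * (j : ℝ) + 1) (n + 1) * (j.factorial * poch (1 / 2) j) =
    (n + 1).factorial * poch (((n : ℝ) + 2) / 2) j * poch (((n : ℝ) + 3) / 2) j := by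
  induction j with
  | zero =>
    have := ascPochhammer_eval_one ℝ (n + 1)
    simp [poch_zero, poch, this]
  | succ j ih =>
    have h1 := poch_shift (2 * (j : ℝ) + 1) (n + 1)
    have h2 := poch_shift (2 * (j : ℝ) + 1 + 1) (n + 1)
    rw [show 2 * (j : ℝ) + 1 + 1 + 1 = 2 * ((j : ℝ) + 1) + 1 by ring] at h2
    push_cast at h1 h2
    rw [poch_succ (1 / 2), poch_succ (((n : ℝ) + 2) / 2), poch_succ (((n : ℝ) + 3) / 2),
      Nat.factorial_succ j]
    push_cast
    linear_combination (((n : ℝ) + 2) / 2 + j) * (((n : ℝ) + 3) / 2 + j) * ih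
      + (j.factorial * poch (1 / 2) j) * (1 / 4) *
        ((2 * (j : ℝ) + 1) * h2 + (2 * (j : ℝ) + 1 + 1 + (n + 1)) * h1)

lemma sum_inv (n : ℕ) : ∀ a : ℝ, 0 < a → 
    (fwdDiff (1 : ℝ))^[n] (fun x => x⁻¹) a = (-1) ^ n * n.factorial / poch a (n + 1) := by
  induction n with
  | zero => intro a ha; simp [poch_succ, poch_zero]
  | succ n ih =>
    intro a ha
    rw [Function.iterate_succ_apply', fwdDiff, ih a ha, ih (a + 1) (by linarith)]
    have h1 : poch a (n + 2) = a * poch (a + 1) (n + 1) := poch_succ_left _ _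
    have h2 : poch a (n + 2) = poch a (n + 1) * (a + (n + 1)) := by
      rw [poch_succ]; push_cast; ring
    have p1 := poch_pos a ha (n + 1)
    have p2 := poch_pos (a + 1) (by linarith) (n + 1)
    have p3 := poch_pos a ha (n + 2)
    have e1 : 1 / poch (a + 1) (n + 1) = a / poch a (n + 2) := by
      rw [h1]; field_simp
    have e2 : 1 / poch a (n + 1) = (a + (n + 1)) / poch a (n + 2) := by
      rw [h2]; field_simp
    rw [Nat.factorial_succ]
    push_cast
    linear_combination (-1) ^ n * (n.factorial : ℝ) * (e1 - e2)

lemma sum_poly (n : ℕ) (q : Polynomial ℝ) (hq : q.natDegree ≤ n) (a : ℝ) (ha : 0 < a) :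
    ∑ i ∈ Finset.range (n + 1), (-1) ^ (n - i) * (n.choose i : ℝ) * (q.eval (i : ℝ) / (i + a)) =
      q.eval (-a) * ((-1) ^ n * n.factorial / poch a (n + 1)) := by
  set r := q /ₘ (Polynomial.X - Polynomial.C (-a)) with hr
  have hq' : ∀ x, q.eval x = q.eval (-a) + (x + a) * r.eval x := by
    intro x
    have := congrArg (Polynomial.eval x)
      (Polynomial.modByMonic_add_div q (Polynomial.X - Polynomial.C (-a)))
    rw [Polynomial.modByMonic_X_sub_C_eq_C_eval] at this
    simp at this
    rw [← this, hr]; simp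
  have hr0 : ∑ i ∈ Finset.range (n + 1), (-1) ^ (n - i) * (n.choose i : ℝ) * r.eval (i : ℝ) = 0 := by
    rcases Nat.eq_zero_or_pos n with h0 | h0
    · subst h0
      have : r = 0 := by
        rw [hr, Polynomial.divByMonic_eq_zero_iff (Polynomial.monic_X_sub_C _),
          Polynomial.degree_X_sub_C]
        exact lt_of_le_of_lt (Polynomial.natDegree_le_iff_degree_le.1 hq) (by norm_num)
      simp [this]
    · have hd : r.natDegree < n := by
        rw [hr, Polynomial.natDegree_divByMonic _ (Polynomial.monic_X_sub_C _),
          Polynomial.natDegree_X_sub_C]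
        omega
      have h1 := congrFun (Polynomial.fwdDiff_iter_eq_zero_of_degree_lt hd) 0
      rw [fwdDiff_iter_eq_sum_shift] at h1
      simpa using h1
  have hs := sum_inv n a ha
  rw [fwdDiff_iter_eq_sum_shift] at hs
  rw [← hs, Finset.mul_sum, ← sub_eq_zero, ← Finset.sum_sub_distrib, ← hr0]
  refine Finset.sum_congr rfl fun i _ => ?_
  have hp : (i : ℝ) + a ≠ 0 := by positivity
  rw [hq' i]
  simp only [nsmul_eq_mul, mul_one, zsmul_eq_mul]
  push_cast
  rw [add_comm a]
  field_simp
  ring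

lemma moment (n m : ℕ) : ∫ x in (0 : ℝ)..1, pAlp n x * x ^ m =
    (-1) ^ n * poch ((1 - (m : ℝ)) / 2) n / poch ((m : ℝ) + 1) (n + 1) := by
  let q : Polynomial ℝ :=
    (ascPochhammer ℝ n).comp (Polynomial.C (1 / 2) * Polynomial.X + Polynomial.C 1)
  have hq : q.natDegree ≤ n := by
    refine Polynomial.natDegree_comp_le.trans ?_
    rw [ascPochhammer_natDegree]
    have : (Polynomial.C (1 / 2 : ℝ) * Polynomial.X + Polynomial.C 1).natDegree ≤ 1 :=
      Polynomial.natDegree_linear_le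
    nlinarith
  have hqe : ∀ x, q.eval x = poch (x / 2 + 1) n := by
    intro x
    simp only [q, poch, Polynomial.eval_comp]
    congr 1
    simp
    ring
  have h := sum_poly n q hq ((m : ℝ) + 1) (by positivity)
  have e : (fun x : ℝ => pAlp n x * x ^ m) = fun x => ∑ i ∈ Finset.range (n + 1),
      ((n.choose i : ℝ) * (poch ((i : ℝ) / 2 + 1) n / (n.factorial : ℝ)) * (-1) ^ (n - i))
        * x ^ (i + m) := by
    funext x
    rw [pAlp, Finset.sum_mul]
    refine Finset.sum_congr rfl fun i _ => ?_
    ring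
  rw [e, intervalIntegral.integral_finsetSum
    (fun i _ => (Continuous.intervalIntegrable (by fun_prop) _ _))]
  simp only [intervalIntegral.integral_const_mul, integral_pow]
  have hf : (n.factorial : ℝ) ≠ 0 := by positivity
  rw [hqe] at h
  have hh : (-((m : ℝ) + 1)) / 2 + 1 = (1 - (m : ℝ)) / 2 := by ring
  rw [hh] at h
  have : (-1) ^ n * poch ((1 - (m : ℝ)) / 2) n / poch ((m : ℝ) + 1) (n + 1) =
    (1 / (n.factorial : ℝ)) * (poch ((1 - (m : ℝ)) / 2) n *
      ((-1) ^ n * n.factorial / poch ((m : ℝ) + 1) (n + 1))) := by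
    field_simp
  rw [this, ← h, Finset.mul_sum]
  refine Finset.sum_congr rfl fun i _ => ?_
  rw [hqe]
  push_cast
  simp
  rw [← add_assoc]
  field_simp

lemma poch_neg_nat (j n : ℕ) (h : j < n) : poch (-(j : ℝ)) n = 0 := by
  induction n with
  | zero => omega
  | succ n ih =>
    rw [poch_succ]
    rcases Nat.lt_succ_iff_lt_or_eq.1 h with h | h
    · rw [ih h, zero_mul]
    · subst h; simp

lemma sum_even (k : ℕ) (f : ℕ → ℝ) (hf : ∀ j, 2 * j + 1 ≤ k → f (2 * j + 1) = 0) :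
    ∑ m ∈ Finset.range (k + 1), f m = ∑ j ∈ Finset.range (k / 2 + 1), f (2 * j) := by
  symm
  rw [← Finset.sum_image (f := f) (s := Finset.range (k / 2 + 1)) (g := fun j => 2 * j)
    (fun a _ b _ hab => by simpa using hab)]
  refine Finset.sum_subset ?_ ?_
  · intro x hx
    simp only [Finset.mem_image, Finset.mem_range] at hx ⊢
    omega
  · intro x hx hx'
    simp only [Finset.mem_image, Finset.mem_range, not_exists, not_and] at hx hx'
    rcases Nat.even_or_odd' x with ⟨c, rfl | rfl⟩
    · exact absurd rfl (hx' c (by omega))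
    · exact hf c (by omega)

/-- Gram matrix entries: for `k ≤ n`,
`∫₀¹ p_n p_k = (-1)^{n+k} ((1/2)_n/(n+1)!) ₄F₃`-type terminating sum. -/
theorem gram_pAlp (n k : ℕ) (hkn : k ≤ n) :
    ∫ x in (0 : ℝ)..1, pAlp n x * pAlp k x =
      (-1) ^ (n + k) * (poch (1 / 2) n / ((n + 1).factorial : ℝ)) *
        ∑ j ∈ Finset.range (k / 2 + 1),
          (poch ((k : ℝ) + 1) j * poch (-(k : ℝ) / 2) j * poch (-((k : ℝ) - 1) / 2) j
              * poch (1 / 2) j) /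
            (poch (-(n : ℝ) + 1 / 2) j * poch (((n : ℝ) + 2) / 2) j
              * poch (((n : ℝ) + 3) / 2) j * (j.factorial : ℝ)) := by
  have e : (fun x : ℝ => pAlp n x * pAlp k x) = fun x => ∑ i ∈ Finset.range (k + 1),
      ((k.choose i : ℝ) * (poch ((i : ℝ) / 2 + 1) k / (k.factorial : ℝ)) * (-1) ^ (k - i))
        * (pAlp n x * x ^ i) := by
    funext x
    rw [pAlp.eq_1 k, Finset.mul_sum]
    refine Finset.sum_congr rfl fun i _ => ?_
    ring
  have hc : Continuous (pAlp n) := by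
    unfold pAlp
    fun_prop
  rw [e, intervalIntegral.integral_finsetSum
    (fun i _ => (Continuous.intervalIntegrable (by fun_prop) _ _))]
  simp only [intervalIntegral.integral_const_mul, moment]
  rw [sum_even, Finset.mul_sum]
  · refine Finset.sum_congr rfl fun j hj => ?_
    have hj' : 2 * j ≤ k := by
      have := Finset.mem_range.1 hj
      omega
    have hA := termA k j
    have hB := termB k j
    have hC := termC n j
    have hD := termD n j
    have f1 : (j.factorial : ℝ) ≠ 0 := by positivity
    have f2 : (k.factorial : ℝ) ≠ 0 := by positivity
    have f3 : ((n + 1).factorial : ℝ) ≠ 0 := by positivity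
    have q1 := (poch_pos (1 / 2) (by norm_num) j).ne'
    have q1' := (poch_pos (1 / 2) (by norm_num) n).ne'
    have q2 := (poch_pos (((n : ℝ) + 2) / 2) (by positivity) j).ne'
    have q3 := (poch_pos (((n : ℝ) + 3) / 2) (by positivity) j).ne'
    have q4 := (poch_pos (2 * (j : ℝ) + 1) (by positivity) (n + 1)).ne'
    have q5 : poch (-(n : ℝ) + 1 / 2) j ≠ 0 := by
      intro h0
      rw [h0, mul_zero] at hC
      exact mul_ne_zero q1' q1 hC.symm
    have s : (-1 : ℝ) ^ (k - 2 * j) = (-1) ^ k := by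
      conv_rhs => rw [← Nat.sub_add_cancel hj', pow_add, pow_mul]
      simp
    rw [s, pow_add]
    push_cast
    rw [show 2 * (j : ℝ) / 2 + 1 = j + 1 by ring, show (1 - 2 * (j : ℝ)) / 2 = 1 / 2 - j by ring]
    rw [← eq_div_iff (mul_ne_zero f1 q1)] at hA hD
    rw [← eq_div_iff f1] at hB
    rw [← eq_div_iff q5] at hC
    rw [hA, hB, hC, hD]
    field_simp
  · intro j hj
    have : (1 - ((2 * j + 1 : ℕ) : ℝ)) / 2 = -(j : ℝ) := by push_cast; ring
    rw [this, poch_neg_nat j n (by omega)]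
    simp
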